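/- Let q be a complex number with |q| = 1, and let V₁, V₂ be isometries on a complex Hilbert space H such that V = V₁V₂ is a shift. Let 𝔯_q be the unitary defined by 𝔯_q h = Σ_{n≥0} qⁿ Vⁿ(I − VV*)V^{*n}h. Then: (1) (V₁,V₂) is doubly commutative if and only if (V₁𝔯_q, 𝔯_{q̄}V₂) is doubly q-commutative; (2) (V₁,V₂) is doubly q-commutative if and only if (V₁𝔯_{q̄}, 𝔯_q V₂) is doubly commutative. -/

import Mathlib

open ContinuousLinearMap Filter

section Rotation

variable {H : Type*} [NormedAddCommGroup H] [InnerProductSpace ℂ H] [CompleteSpace H]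

/-- `R` is the strong sum `∑ cⁿ Vⁿ (1 - V V*) V*ⁿ`, the rotation by `c` along the isometry `V`. -/
def IsRotation (V : H →L[ℂ] H) (c : ℂ) (R : H →L[ℂ] H) : Prop :=
  ∀ h : H, HasSum (fun n : ℕ => c ^ n • ((V ^ n) ((1 - V * star V) ((star V ^ n) h)))) (R h)

namespace IsRotation

variable {V R R' : H →L[ℂ] H} {c : ℂ}

theorem eq_add (hR : IsRotation V c R) : R = (1 - V * star V) + c • (V * R * star V) := by
  ext h
  have h1 := (hasSum_nat_add_iff' 1).mpr (hR h)
  have h2 := (V.hasSum (hR (star V h))).const_smul c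
  have h3 : R h - (1 - V * star V) h = c • V (R (star V h)) := by
    have := h1.unique (h2.congr_fun ?_)
    · simpa using this
    · intro n
      simp only [map_smul, smul_smul]
      rw [pow_succ' c, pow_succ' V, pow_succ (star V)]
      rfl
  rw [sub_eq_iff_eq_add'] at h3
  exact h3

theorem mul_shift (hR : IsRotation V c R) (hV : star V * V = 1) : R * V = c • (V * R) := by
  conv_lhs => rw [hR.eq_add]
  simp [add_mul, sub_mul, mul_assoc, hV]

theorem mul_shift_pow (hR : IsRotation V c R) (hV : star V * V = 1) (n : ℕ) :
    R * V ^ n = c ^ n • (V ^ n * R) := by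
  induction n with
  | zero => simp
  | succ n ih =>
    rw [pow_succ, ← mul_assoc, ih, smul_mul_assoc, mul_assoc, hR.mul_shift hV, mul_smul_comm,
      smul_smul, pow_succ, mul_assoc]

theorem mul_defect (hR : IsRotation V c R) (hV : star V * V = 1) :
    R * (1 - V * star V) = 1 - V * star V := by
  rw [mul_sub, mul_one, ← mul_assoc, hR.mul_shift hV, smul_mul_assoc]
  nth_rewrite 1 [hR.eq_add]
  simp

theorem one_of_shift (hV : star V * V = 1)
    (hshift : ∀ h : H, Tendsto (fun n : ℕ => (star V ^ n) h) atTop (nhds 0))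
    (hR : IsRotation V 1 R) : R = 1 := by
  have hnorm : ∀ (n : ℕ) (x : H), ‖(V ^ n) x‖ = ‖x‖ := by
    have hiso : ∀ x : H, ‖V x‖ = ‖x‖ := V.norm_map_iff_adjoint_comp_self.mpr hV
    intro n
    induction n with
    | zero => simp
    | succ n ih => intro x; rw [pow_succ]; exact (ih (V x)).trans (hiso x)
  ext h
  refine tendsto_nhds_unique (hR h).tendsto_sum_nat ?_
  have hsum : ∀ N : ℕ, ∑ n ∈ Finset.range N,
      (1 : ℂ) ^ n • ((V ^ n) ((1 - V * star V) ((star V ^ n) h))) =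
        h - (V ^ N) ((star V ^ N) h) := by
    intro N
    induction N with
    | zero => simp
    | succ N ih =>
      rw [Finset.sum_range_succ, ih, pow_succ V, pow_succ' (star V)]
      simp
  simp_rw [hsum]
  have h0 : Tendsto (fun N : ℕ => (V ^ N) ((star V ^ N) h)) atTop (nhds 0) := by
    rw [tendsto_zero_iff_norm_tendsto_zero]
    simp_rw [hnorm]
    simpa only [norm_zero] using (hshift h).norm
  simpa using h0.const_sub h

theorem mul_eq_one (hV : star V * V = 1)
    (hshift : ∀ h : H, Tendsto (fun n : ℕ => (star V ^ n) h) atTop (nhds 0))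
    {d : ℂ} (hcd : c * d = 1) (hR : IsRotation V c R) (hR' : IsRotation V d R') :
    R * R' = 1 := by
  refine one_of_shift hV hshift fun h => (R.hasSum (hR' h)).congr_fun fun n => ?_
  have key : R * (V ^ n * (1 - V * star V)) = c ^ n • (V ^ n * (1 - V * star V)) := by
    rw [← mul_assoc, hR.mul_shift_pow hV, smul_mul_assoc, mul_assoc, hR.mul_defect hV]
  have key' : R ((V ^ n) ((1 - V * star V) ((star V ^ n) h)))
      = c ^ n • (V ^ n) ((1 - V * star V) ((star V ^ n) h)) :=
    DFunLike.congr_fun key ((star V ^ n) h)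
  simp only [map_smul]
  rw [key', smul_smul, ← mul_pow, mul_comm d, hcd]

theorem star_eq (hR : IsRotation V c R) (hR' : IsRotation V (starRingEnd ℂ c) R') :
    star R = R' := by
  rw [star_eq_adjoint, eq_comm, eq_adjoint_iff]
  intro x y
  have h1 := (innerSL ℂ x).hasSum (hR y)
  have h2 := ((innerSL ℂ y).hasSum (hR' x)).map (starRingEnd ℂ) Complex.continuous_conj
  simp only [Function.comp_def, innerSL_apply_apply, inner_conj_symm] at h1 h2
  refine h2.unique (h1.congr_fun fun n => ?_)
  have hsa : star (V ^ n * (1 - V * star V) * star V ^ n)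
      = V ^ n * (1 - V * star V) * star V ^ n := by
    simp [mul_assoc]
  have hi : inner ℂ ((V ^ n * (1 - V * star V) * star V ^ n) x) y
      = inner ℂ x ((V ^ n * (1 - V * star V) * star V ^ n) y) := by
    conv_lhs => rw [← hsa, star_eq_adjoint, adjoint_inner_left]
  rw [inner_smul_left, inner_smul_right, map_pow, Complex.conj_conj]
  exact congrArg _ hi

end IsRotation

/-- Twisting a factorization `V₁ V₂` of a shift by the rotation `R` of weight `b` turns doubly
`a`-commuting factors into doubly `a b⁻¹`-commuting ones, and conversely. -/
theorem doubly_commute_iff_rotation {V₁ V₂ R R' : H →L[ℂ] H} {a b : ℂ}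
    (ha : ‖a‖ = 1) (hb : ‖b‖ = 1)
    (hV₁ : star V₁ * V₁ = 1) (hV₂ : star V₂ * V₂ = 1)
    (hshift : ∀ h : H, Tendsto (fun n : ℕ => (star (V₁ * V₂) ^ n) h) atTop (nhds 0))
    (hR : IsRotation (V₁ * V₂) b R) (hR' : IsRotation (V₁ * V₂) (starRingEnd ℂ b) R') :
    (V₁ * V₂ = a • (V₂ * V₁) ∧ V₂ * star V₁ = a • (star V₁ * V₂)) ↔
      ((V₁ * R') * (R * V₂) = (a * starRingEnd ℂ b) • ((R * V₂) * (V₁ * R')) ∧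
        (R * V₂) * star (V₁ * R') =
          (a * starRingEnd ℂ b) • (star (V₁ * R') * (R * V₂))) := by
  have hbb : b * starRingEnd ℂ b = 1 := by simp [Complex.mul_conj', hb]
  have hbb' : starRingEnd ℂ b * b = 1 := by rw [mul_comm, hbb]
  have haa : a * starRingEnd ℂ a = 1 := by simp [Complex.mul_conj', ha]
  have haa' : starRingEnd ℂ a * a = 1 := by rw [mul_comm, haa]
  have ha0 : a ≠ 0 := left_ne_zero_of_mul_eq_one haa
  have hb0 : b ≠ 0 := left_ne_zero_of_mul_eq_one hbb
  have hV : star (V₁ * V₂) * (V₁ * V₂) = 1 := by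
    rw [star_mul, mul_assoc, ← mul_assoc (star V₁), hV₁, one_mul, hV₂]
  have hRR' : R * R' = 1 := IsRotation.mul_eq_one hV hshift hbb hR hR'
  have hR'R : R' * R = 1 := IsRotation.mul_eq_one hV hshift hbb' hR' hR
  have hstar : star R' = R := by rw [← hR.star_eq hR', star_star]
  have hconj : R * (V₁ * V₂) * R' = b • (V₁ * V₂) := by
    rw [hR.mul_shift hV, smul_mul_assoc, mul_assoc (V₁ * V₂), hRR', mul_one]
  have hlhs : (V₁ * R') * (R * V₂) = V₁ * V₂ := by
    rw [mul_assoc, ← mul_assoc R', hR'R, one_mul]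
  have hfst : V₁ * V₂ = a • (V₂ * V₁) ↔
      (V₁ * R') * (R * V₂) = (a * starRingEnd ℂ b) • ((R * V₂) * (V₁ * R')) := by
    have hre : (R * V₂) * (V₁ * R') = R * (V₂ * V₁) * R' := by simp only [mul_assoc]
    rw [hlhs, hre]
    constructor
    · intro h
      have : V₂ * V₁ = starRingEnd ℂ a • (V₁ * V₂) := by rw [h, smul_smul, haa', one_smul]
      rw [this, mul_smul_comm, smul_mul_assoc, hconj, smul_smul, smul_smul]
      rw [show a * starRingEnd ℂ b * starRingEnd ℂ a * b = 1 by
        linear_combination haa + a * starRingEnd ℂ a * hbb, one_smul]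
    · intro h
      have h1 : R' * (V₁ * V₂) * R = (a * starRingEnd ℂ b) • (V₂ * V₁) := by
        rw [h, mul_smul_comm, smul_mul_assoc]
        congr 1
        calc R' * (R * (V₂ * V₁) * R') * R = (R' * R) * (V₂ * V₁) * (R' * R) := by
              simp only [mul_assoc]
          _ = _ := by rw [hR'R, one_mul, mul_one]
      rw [hR'.mul_shift hV, smul_mul_assoc, mul_assoc (V₁ * V₂), hR'R, mul_one] at h1
      have h2 := congrArg (fun T => b • T) h1
      simp only [smul_smul, hbb, one_smul] at h2
      rw [h2]
      congr 1
      linear_combination a * hbb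
  rw [← hfst]
  refine and_congr_right fun hcomm => ?_
  have hVV₂ : star (V₁ * V₂) * V₂ = starRingEnd ℂ a • star V₁ := by
    rw [hcomm, star_smul, star_mul, smul_mul_assoc, mul_assoc, hV₂, mul_one]
    rfl
  have hV₁V : star V₁ * (V₁ * V₂) = V₂ := by rw [← mul_assoc, hV₁, one_mul]
  have hdef : star V₁ * (1 - V₁ * V₂ * star (V₁ * V₂)) * V₂
      = star V₁ * V₂ - starRingEnd ℂ a • (V₂ * star V₁) := by
    rw [mul_sub, sub_mul, mul_one, ← mul_assoc (star V₁), hV₁V, mul_assoc V₂, hVV₂, mul_smul_comm]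
  have hmid : star V₁ * R * V₂ = (star V₁ * V₂ - starRingEnd ℂ a • (V₂ * star V₁))
      + (b * starRingEnd ℂ a) • (V₂ * R * star V₁) := by
    conv_lhs => rw [hR.eq_add]
    rw [mul_add, add_mul, hdef, mul_smul_comm, smul_mul_assoc]
    rw [show star V₁ * (V₁ * V₂ * R * star (V₁ * V₂)) * V₂
      = (star V₁ * (V₁ * V₂)) * R * (star (V₁ * V₂) * V₂) by simp only [mul_assoc]]
    rw [hV₁V, hVV₂, mul_smul_comm, smul_smul]
  have hl : (R * V₂) * star (V₁ * R') = R * (V₂ * R * star V₁) := by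
    rw [star_mul, hstar]; simp only [mul_assoc]
  have hr : star (V₁ * R') * (R * V₂) = R * (star V₁ * R * V₂) := by
    rw [star_mul, hstar]; simp only [mul_assoc]
  have hcancel : ∀ S T : H →L[ℂ] H, R * S = R * T ↔ S = T := fun S T =>
    ⟨fun h => by simpa [← mul_assoc, hR'R] using congrArg (fun X => R' * X) h, fun h => by rw [h]⟩
  rw [hl, hr, ← mul_smul_comm (a * starRingEnd ℂ b) R, hcancel, hmid, smul_add, smul_smul,
    show a * starRingEnd ℂ b * (b * starRingEnd ℂ a) = 1 by
      linear_combination haa + a * starRingEnd ℂ a * hbb, one_smul, right_eq_add,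
    smul_eq_zero_iff_right (by simp [ha0, hb0]), sub_eq_zero]
  constructor
  · intro h
    rw [h, smul_smul, haa', one_smul]
  · intro h
    rw [h, smul_smul, haa, one_smul]

end Rotation

theorem stmt_12 {H : Type*} [NormedAddCommGroup H] [InnerProductSpace ℂ H] [CompleteSpace H]
    (q : ℂ) (hq : ‖q‖ = 1) (V₁ V₂ : H →L[ℂ] H)
    (hV₁ : adjoint V₁ ∘L V₁ = 1) (hV₂ : adjoint V₂ ∘L V₂ = 1)
    (hshift : ∀ h : H,
      Tendsto (fun n : ℕ => ((adjoint (V₁ ∘L V₂)) ^ n) h) atTop (nhds 0))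
    (𝔯q 𝔯q' : H →L[ℂ] H)
    (h𝔯q : ∀ h : H, HasSum
      (fun n : ℕ => q ^ n • (((V₁ ∘L V₂) ^ n)
        ((1 - (V₁ ∘L V₂) ∘L adjoint (V₁ ∘L V₂)) (((adjoint (V₁ ∘L V₂)) ^ n) h))))
      (𝔯q h))
    (h𝔯q' : ∀ h : H, HasSum
      (fun n : ℕ => (starRingEnd ℂ q) ^ n • (((V₁ ∘L V₂) ^ n)
        ((1 - (V₁ ∘L V₂) ∘L adjoint (V₁ ∘L V₂)) (((adjoint (V₁ ∘L V₂)) ^ n) h))))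
      (𝔯q' h)) :
    ((V₁ ∘L V₂ = V₂ ∘L V₁ ∧ V₂ ∘L adjoint V₁ = adjoint V₁ ∘L V₂) ↔
      ((V₁ ∘L 𝔯q) ∘L (𝔯q' ∘L V₂) = q • ((𝔯q' ∘L V₂) ∘L (V₁ ∘L 𝔯q)) ∧
        (𝔯q' ∘L V₂) ∘L adjoint (V₁ ∘L 𝔯q)
          = q • (adjoint (V₁ ∘L 𝔯q) ∘L (𝔯q' ∘L V₂)))) ∧
    ((V₁ ∘L V₂ = q • (V₂ ∘L V₁) ∧ V₂ ∘L adjoint V₁ = q • (adjoint V₁ ∘L V₂)) ↔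
      ((V₁ ∘L 𝔯q') ∘L (𝔯q ∘L V₂) = (𝔯q ∘L V₂) ∘L (V₁ ∘L 𝔯q') ∧
        (𝔯q ∘L V₂) ∘L adjoint (V₁ ∘L 𝔯q')
          = adjoint (V₁ ∘L 𝔯q') ∘L (𝔯q ∘L V₂))) := by
  have hq' : ‖starRingEnd ℂ q‖ = 1 := by rwa [RCLike.norm_conj]
  have hcc : starRingEnd ℂ (starRingEnd ℂ q) = q := Complex.conj_conj q
  have hqq : q * starRingEnd ℂ q = 1 := by simp [Complex.mul_conj', hq]
  have h₁ := doubly_commute_iff_rotation (a := 1) norm_one hq' hV₁ hV₂ hshift h𝔯q'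
    (by rw [hcc]; exact h𝔯q)
  have h₂ := doubly_commute_iff_rotation hq hq hV₁ hV₂ hshift h𝔯q h𝔯q'
  rw [hcc, one_mul, one_smul, one_smul] at h₁
  rw [hqq, one_smul, one_smul] at h₂
  exact ⟨h₁, h₂⟩
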